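/- (Coordinate-wise characterization of the outcome Markov boundary.) Let A and Y be random variables and V = (V_i)_{i ∈ I} a finite family of random variables such that the joint law of (A, Y, (V_i)_{i ∈ I}) is absolutely continuous with respect to P_A ⊗ P_Y ⊗ ⨂_{i ∈ I} P_{V_i} with a density that is positive almost everywhere. Then for every J ⊆ I, the outcome Markov boundary of the subfamily (V_i)_{i ∈ J} satisfies R_{Y|A}(V_J) = {i ∈ J : Y is NOT conditionally independent of V_i given (A, V_{J ∖ {i}})}. -/

import Mathlib

/-!
The boundary is the intersection of all blankets `J' ⊆ J`. The set `J` is itself a blanket, and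
`J \ {i}` is a blanket exactly when `Y ⊥⊥ V_i | (A, V_{J \ {i}})`; this gives the inclusion `⊆`.
For `⊇`, suppose a blanket `J'` misses some `i ∈ J`. The weak union property of conditional
independence moves all of `V_{J \ J'}` except `V_i` into the conditioning, so
`Y ⊥⊥ V_i | (A, V_{J \ {i}})`.

Weak union (`condIndepFun_weak_union`) rests on the characterization of `Y ⊥⊥ G | K` by
`P(Y ∈ s | K, G) = P(Y ∈ s | K)`: by the tower property this common value is also
`P(Y ∈ s | n)` for every σ-algebra `n` between `σ(K)` and `σ(K, G)`.
-/

open MeasureTheory ProbabilityTheory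

/-- `X ⊥⊥ Y | W` under `μ`: conditional independence of the random elements `X` and `Y`
given the σ-algebra generated by the random element `W`. -/
def CondIndepGiven {Ω α β γ : Type*} [mΩ : MeasurableSpace Ω] [StandardBorelSpace Ω]
    [MeasurableSpace α] [MeasurableSpace β] [MeasurableSpace γ]
    (μ : Measure Ω) [IsFiniteMeasure μ]
    (X : Ω → α) (Y : Ω → β) (W : Ω → γ) : Prop :=
  ∃ hle : MeasurableSpace.comap W inferInstance ≤ mΩ,
    CondIndepFun (MeasurableSpace.comap W inferInstance) hle X Y μ

/-- The subvector `(V_i)_{i ∈ J}` of a family of random variables. -/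
def subvec {Ω I : Type*} (V : I → Ω → ℝ) (J : Set I) : Ω → (J → ℝ) :=
  fun ω j => V j ω

/-- The joint law of `(V_i)_{i ∈ I}` is absolutely continuous w.r.t. the product
`⨂_{i ∈ I} P_{V_i}` of its one-dimensional marginal laws, with a density that is positive
almost everywhere. -/
def PositiveFamilyDensity {Ω I : Type*} [MeasurableSpace Ω] [Fintype I]
    (μ : Measure Ω) (V : I → Ω → ℝ) : Prop :=
  μ.map (fun ω i => V i ω) ≪ Measure.pi (fun i => μ.map (V i)) ∧
    ∀ᵐ x ∂(Measure.pi fun i => μ.map (V i)),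
      0 < (μ.map (fun ω i => V i ω)).rnDeriv (Measure.pi fun i => μ.map (V i)) x

/-- The joint law of `(W, (V_i)_{i ∈ I})` is absolutely continuous w.r.t. the product
`P_W ⊗ ⨂_{i ∈ I} P_{V_i}` of its one-dimensional marginal laws, with a density that is
positive almost everywhere. -/
def PositivePairDensity {Ω α I : Type*} [MeasurableSpace Ω] [MeasurableSpace α] [Fintype I]
    (μ : Measure Ω) (W : Ω → α) (V : I → Ω → ℝ) : Prop :=
  μ.map (fun ω => (W ω, fun i => V i ω)) ≪ (μ.map W).prod (Measure.pi fun i => μ.map (V i)) ∧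
    ∀ᵐ x ∂((μ.map W).prod (Measure.pi fun i => μ.map (V i))),
      0 < (μ.map (fun ω => (W ω, fun i => V i ω))).rnDeriv
            ((μ.map W).prod (Measure.pi fun i => μ.map (V i))) x

/-- The joint law of `(W, U, (V_i)_{i ∈ I})` is absolutely continuous w.r.t. the product
`P_W ⊗ P_U ⊗ ⨂_{i ∈ I} P_{V_i}` of its one-dimensional marginal laws, with a density that is
positive almost everywhere. -/
def PositiveTripleDensity {Ω I : Type*} [MeasurableSpace Ω] [Fintype I]
    (μ : Measure Ω) (W U : Ω → ℝ) (V : I → Ω → ℝ) : Prop :=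
  μ.map (fun ω => (W ω, U ω, fun i => V i ω)) ≪
      (μ.map W).prod ((μ.map U).prod (Measure.pi fun i => μ.map (V i))) ∧
    ∀ᵐ x ∂((μ.map W).prod ((μ.map U).prod (Measure.pi fun i => μ.map (V i)))),
      0 < (μ.map (fun ω => (W ω, U ω, fun i => V i ω))).rnDeriv
            ((μ.map W).prod ((μ.map U).prod (Measure.pi fun i => μ.map (V i)))) x

/-- `J ∈ 𝔯_A(V)`: `J` is a treatment Markov blanket of the family `V`,
i.e. `A ⊥⊥ V_{I∖J} | V_J`. -/
def IsTreatBlanket {Ω I : Type*} [MeasurableSpace Ω] [StandardBorelSpace Ω]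
    (μ : Measure Ω) [IsFiniteMeasure μ] (A : Ω → ℝ) (V : I → Ω → ℝ) (J : Set I) : Prop :=
  CondIndepGiven μ A (subvec V (Set.univ \ J)) (subvec V J)

/-- `J ∈ 𝔯_{Y|A}(V)`: `J` is an outcome Markov blanket of the family `V`,
i.e. `Y ⊥⊥ V_{I∖J} | (A, V_J)`. -/
def IsOutBlanket {Ω I : Type*} [MeasurableSpace Ω] [StandardBorelSpace Ω]
    (μ : Measure Ω) [IsFiniteMeasure μ] (A Y : Ω → ℝ) (V : I → Ω → ℝ) (J : Set I) : Prop :=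
  CondIndepGiven μ Y (subvec V (Set.univ \ J)) (fun ω => (A ω, subvec V J ω))

/-- `R_A(V_J)`: the treatment Markov boundary of the subfamily `(V_i)_{i ∈ J}`, i.e. the
intersection of all `J' ⊆ J` such that `A ⊥⊥ V_{J∖J'} | V_{J'}`. -/
def treatBoundary {Ω I : Type*} [MeasurableSpace Ω] [StandardBorelSpace Ω]
    (μ : Measure Ω) [IsFiniteMeasure μ] (A : Ω → ℝ) (V : I → Ω → ℝ) (J : Set I) : Set I :=
  ⋂₀ {J' : Set I | J' ⊆ J ∧ CondIndepGiven μ A (subvec V (J \ J')) (subvec V J')}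

/-- `R_{Y|A}(V_J)`: the outcome Markov boundary of the subfamily `(V_i)_{i ∈ J}`, i.e. the
intersection of all `J' ⊆ J` such that `Y ⊥⊥ V_{J∖J'} | (A, V_{J'})`. -/
def outBoundary {Ω I : Type*} [MeasurableSpace Ω] [StandardBorelSpace Ω]
    (μ : Measure Ω) [IsFiniteMeasure μ] (A Y : Ω → ℝ) (V : I → Ω → ℝ) (J : Set I) : Set I :=
  ⋂₀ {J' : Set I | J' ⊆ J ∧
        CondIndepGiven μ Y (subvec V (J \ J')) (fun ω => (A ω, subvec V J' ω))}

/-- `A` is a binary treatment taking values in `{0, 1}`. -/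
def IsBinary {Ω : Type*} (A : Ω → ℝ) : Prop :=
  ∀ ω, A ω = 0 ∨ A ω = 1

/-- Consistency of the observed outcome `Y` with the potential outcomes `Y₀, Y₁`:
`Y = Y₁` a.s. on `{A = 1}` and `Y = Y₀` a.s. on `{A = 0}`. -/
def Consistency {Ω : Type*} [MeasurableSpace Ω] (μ : Measure Ω) (A Y Y0 Y1 : Ω → ℝ) : Prop :=
  (∀ᵐ ω ∂μ, A ω = 1 → Y ω = Y1 ω) ∧ (∀ᵐ ω ∂μ, A ω = 0 → Y ω = Y0 ω)

/-- The random vector `C` controls for confounding: `Y_a ⊥⊥ A | C` for `a = 0, 1`. -/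
def ControlsConfounding {Ω γ : Type*} [MeasurableSpace Ω] [StandardBorelSpace Ω]
    [MeasurableSpace γ] (μ : Measure Ω) [IsFiniteMeasure μ]
    (A Y0 Y1 : Ω → ℝ) (C : Ω → γ) : Prop :=
  CondIndepGiven μ Y0 A C ∧ CondIndepGiven μ Y1 A C

/-- If conditioning on `p` gives no more information on the events of `m₁` than conditioning on
the coarser `n`, then `m₁` is conditionally independent of every `m₂ ≤ p` given `n`. -/
lemma condIndep_of_condExp_eq {Ω : Type*} {n p m₁ m₂ : MeasurableSpace Ω}
    [mΩ : MeasurableSpace Ω] [StandardBorelSpace Ω] {μ : Measure Ω} [IsFiniteMeasure μ]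
    (hnp : n ≤ p) (hp : p ≤ mΩ) (h₁ : m₁ ≤ mΩ) (h₂ : m₂ ≤ p)
    (h : ∀ t, MeasurableSet[m₁] t → μ⟦t | p⟧ =ᵐ[μ] μ⟦t | n⟧) :
    CondIndep n m₁ m₂ (hnp.trans hp) μ := by
  rw [condIndep_iff _ _ _ _ h₁ (h₂.trans hp)]
  intro t₁ t₂ ht₁ ht₂
  have hi₁ : Integrable (t₁.indicator fun _ ↦ (1 : ℝ)) μ :=
    (integrable_const 1).indicator (h₁ _ ht₁)
  have hi₂ : Integrable (t₂.indicator fun _ ↦ (1 : ℝ)) μ :=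
    (integrable_const 1).indicator (hp _ (h₂ _ ht₂))
  have hm₂ : StronglyMeasurable[p] (t₂.indicator fun _ ↦ (1 : ℝ)) :=
    stronglyMeasurable_const.indicator (h₂ _ ht₂)
  have hprod : ((t₁ ∩ t₂).indicator fun _ ↦ (1 : ℝ))
      = (t₁.indicator fun _ ↦ (1 : ℝ)) * t₂.indicator fun _ ↦ (1 : ℝ) :=
    Set.inter_indicator_one
  have hmul (f : Ω → ℝ) : f * (t₂.indicator fun _ ↦ (1 : ℝ)) = t₂.indicator f := by
    ext ω
    by_cases hω : ω ∈ t₂ <;> simp [hω]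
  have hint (f : Ω → ℝ) (hf : Integrable f μ) :
      Integrable (f * t₂.indicator fun _ ↦ (1 : ℝ)) μ := by
    rw [hmul]
    exact hf.indicator (hp _ (h₂ _ ht₂))
  rw [hprod]
  calc μ[(t₁.indicator fun _ ↦ (1 : ℝ)) * t₂.indicator fun _ ↦ (1 : ℝ) | n]
      =ᵐ[μ] μ[μ[(t₁.indicator fun _ ↦ (1 : ℝ)) * t₂.indicator fun _ ↦ (1 : ℝ) | p] | n] :=
        (condExp_condExp_of_le hnp hp).symm
    _ =ᵐ[μ] μ[μ⟦t₁ | p⟧ * t₂.indicator fun _ ↦ (1 : ℝ) | n] :=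
        condExp_congr_ae (condExp_mul_of_stronglyMeasurable_right hm₂ (hint _ hi₁) hi₁)
    _ =ᵐ[μ] μ[μ⟦t₁ | n⟧ * t₂.indicator fun _ ↦ (1 : ℝ) | n] :=
        condExp_congr_ae ((h t₁ ht₁).mul Filter.EventuallyEq.rfl)
    _ =ᵐ[μ] μ⟦t₁ | n⟧ * μ⟦t₂ | n⟧ :=
        condExp_mul_of_stronglyMeasurable_left stronglyMeasurable_condExp
          (hint _ integrable_condExp) hi₂

/-- If `Y ⊥⊥ G | K`, then conditioning on `G` in addition to `K` does not change the conditional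
probabilities of events of `Y`. -/
lemma condExp_eq_of_condIndepFun {Ω α β γ : Type*}
    [MeasurableSpace Ω] [StandardBorelSpace Ω] {μ : Measure Ω} [IsFiniteMeasure μ]
    [MeasurableSpace α] [StandardBorelSpace α] [Nonempty α]
    [MeasurableSpace β] [StandardBorelSpace β] [Nonempty β] [MeasurableSpace γ]
    {Y : Ω → α} {G : Ω → β} {K : Ω → γ}
    (hY : Measurable Y) (hG : Measurable G) (hK : Measurable K)
    (h : CondIndepFun (MeasurableSpace.comap K inferInstance) hK.comap_le Y G μ)
    {s : Set α} (hs : MeasurableSet s) :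
    μ⟦Y ⁻¹' s | MeasurableSpace.comap (fun ω ↦ (K ω, G ω)) inferInstance⟧
      =ᵐ[μ] μ⟦Y ⁻¹' s | MeasurableSpace.comap K inferInstance⟧ := by
  have hd := ae_of_ae_map (hK.prodMk hG).aemeasurable
    ((condIndepFun_iff_condDistrib_prod_ae_eq_prodMkRight hY hG hK).1 h.symm)
  filter_upwards [hd, condDistrib_ae_eq_condExp (μ := μ) (hK.prodMk hG) hY hs,
    condDistrib_ae_eq_condExp (μ := μ) hK hY hs] with ω h₁ h₂ h₃
  rw [← h₂, ← h₃]
  simp [Measure.real, h₁, Kernel.prodMkRight_apply]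

/-- Weak union: if `Y ⊥⊥ G | K`, then `Y` is conditionally independent of any function of
`(K, G)` given any σ-algebra between `σ(K)` and `σ(K, G)`. -/
lemma condIndepFun_weak_union {Ω α β γ δ : Type*} {n : MeasurableSpace Ω}
    [mΩ : MeasurableSpace Ω] [StandardBorelSpace Ω] {μ : Measure Ω} [IsFiniteMeasure μ]
    [MeasurableSpace α] [StandardBorelSpace α] [Nonempty α]
    [MeasurableSpace β] [StandardBorelSpace β] [Nonempty β] [MeasurableSpace γ]
    [MeasurableSpace δ]
    {Y : Ω → α} {G : Ω → β} {K : Ω → γ} {X : Ω → δ}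
    (hY : Measurable Y) (hG : Measurable G) (hK : Measurable K)
    (h : CondIndepFun (MeasurableSpace.comap K inferInstance) hK.comap_le Y G μ)
    (hn : n ≤ mΩ) (hKn : MeasurableSpace.comap K inferInstance ≤ n)
    (hnp : n ≤ MeasurableSpace.comap (fun ω ↦ (K ω, G ω)) inferInstance)
    (hX : Measurable[MeasurableSpace.comap (fun ω ↦ (K ω, G ω)) inferInstance] X) :
    CondIndepFun n hn Y X μ := by
  rw [condIndepFun_iff_condIndep]
  refine condIndep_of_condExp_eq hnp (hK.prodMk hG).comap_le hY.comap_le hX.comap_le ?_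
  rintro _ ⟨s, hs, rfl⟩
  have hKG := condExp_eq_of_condIndepFun hY hG hK h hs
  refine hKG.trans ?_
  calc μ⟦Y ⁻¹' s | MeasurableSpace.comap K inferInstance⟧
      = μ[μ⟦Y ⁻¹' s | MeasurableSpace.comap K inferInstance⟧ | n] :=
        (condExp_of_stronglyMeasurable hn (stronglyMeasurable_condExp.mono hKn)
          integrable_condExp).symm
    _ =ᵐ[μ] μ[μ⟦Y ⁻¹' s | MeasurableSpace.comap (fun ω ↦ (K ω, G ω)) inferInstance⟧ | n] :=
        condExp_congr_ae hKG.symm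
    _ =ᵐ[μ] μ⟦Y ⁻¹' s | n⟧ := condExp_condExp_of_le hnp (hK.prodMk hG).comap_le

lemma measurable_subvec {Ω I : Type*} [MeasurableSpace Ω] {V : I → Ω → ℝ}
    (hV : ∀ i, Measurable (V i)) (J : Set I) : Measurable (subvec V J) :=
  measurable_pi_lambda _ fun j ↦ hV j

lemma comap_prodMk_subvec_le {Ω I : Type*} {m : MeasurableSpace Ω} {A : Ω → ℝ}
    {V : I → Ω → ℝ} {S : Set I} (hA : Measurable[m] A) (hV : ∀ j ∈ S, Measurable[m] (V j)) :
    MeasurableSpace.comap (fun ω ↦ (A ω, subvec V S ω)) inferInstance ≤ m :=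
  (hA.prodMk (measurable_pi_lambda (subvec V S) fun j : S ↦ hV j j.2)).comap_le

/-- Coordinate-wise characterization of the outcome Markov boundary:
`R_{Y|A}(V_J) = {i ∈ J : Y is not conditionally independent of V_i given (A, V_{J ∖ {i}})}`. -/
theorem outBoundary_coordinatewise
    {Ω I : Type*} [MeasurableSpace Ω] [StandardBorelSpace Ω] [Fintype I]
    (μ : Measure Ω) [IsProbabilityMeasure μ]
    (A Y : Ω → ℝ) (V : I → Ω → ℝ)
    (hA : Measurable A) (hY : Measurable Y) (hV : ∀ i, Measurable (V i))
    (hpos : PositiveTripleDensity μ A Y V)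
    (J : Set I) :
    outBoundary μ A Y V J
      = {i | i ∈ J ∧
          ¬ CondIndepGiven μ Y (V i) (fun ω => (A ω, subvec V (J \ {i}) ω))} := by
  have hAV (S : Set I) : Measurable fun ω ↦ (A ω, subvec V S ω) :=
    hA.prodMk (measurable_subvec hV S)
  ext i
  simp only [outBoundary, Set.mem_sInter, Set.mem_ofPred_eq]
  constructor
  · intro h
    refine ⟨h J ⟨subset_rfl, (hAV J).comap_le, ?_⟩, ?_⟩
    · -- `V_{J \ J}` is the empty vector, hence constant.
      have : subvec V (J \ J) = fun _ ↦ fun _ ↦ 0 := by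
        funext ω j
        exact absurd j.2.1 j.2.2
      rw [this]
      exact condIndepFun_const_right _ _
    · rintro ⟨hle, hci⟩
      refine (h (J \ {i}) ⟨Set.sdiff_subset, hle, ?_⟩).2 rfl
      -- `J \ (J \ {i}) ⊆ {i}`, so this subvector is a function of `V i`.
      have : subvec V (J \ (J \ {i})) = (fun x _ ↦ x) ∘ V i := by
        funext ω j
        have hj : (j : I) = i := by
          by_contra hne
          exact j.2.2 ⟨j.2.1, hne⟩
        simp [subvec, hj]
      rw [this]
      exact hci.comp measurable_id (measurable_pi_lambda _ fun _ ↦ measurable_id)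
  · rintro ⟨hiJ, hnot⟩ J' ⟨hJ', hle, hci⟩
    by_contra hi
    -- On `J`, every coordinate is read off from `V_{J'}` or from `V_{J \ J'}`.
    have hcoord (j : I) (hj : j ∈ J) :
        Measurable[MeasurableSpace.comap
          (fun ω ↦ ((A ω, subvec V J' ω), subvec V (J \ J') ω)) inferInstance] (V j) := by
      by_cases hj' : j ∈ J'
      · have hf : Measurable fun x : (ℝ × (J' → ℝ)) × (↥(J \ J') → ℝ) ↦ x.1.2 ⟨j, hj'⟩ := by
          fun_prop
        exact hf.comp (comap_measurable _)
      · have hf : Measurable fun x : (ℝ × (J' → ℝ)) × (↥(J \ J') → ℝ) ↦ x.2 ⟨j, hj, hj'⟩ := by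
          fun_prop
        exact hf.comp (comap_measurable _)
    refine hnot ⟨(hAV _).comap_le, condIndepFun_weak_union hY (measurable_subvec hV (J \ J'))
      (hAV J') hci _ ?_ ?_ (hcoord i hiJ)⟩
    · refine comap_prodMk_subvec_le (measurable_fst.comp (comap_measurable _)) fun j hj ↦ ?_
      have hj' : j ∈ J \ {i} := ⟨hJ' hj, fun hji ↦ hi (hji ▸ hj)⟩
      have hf : Measurable fun x : ℝ × (↥(J \ {i}) → ℝ) ↦ x.2 ⟨j, hj'⟩ := by fun_prop
      exact hf.comp (comap_measurable _)
    · exact comap_prodMk_subvec_le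
        ((measurable_fst.comp measurable_fst).comp (comap_measurable _))
        fun j hj ↦ hcoord j hj.1
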